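/- Let X be an ordered Banach space with normal cone, let Z be a pre-ordered Banach space, and let J : X → Z be a positive bounded linear operator with dense range. Assume there is a sequence (R_n) of positive bounded linear operators Z → X such that (J R_n) converges to the identity of Z in the weak operator topology and (R_n J) converges to the identity of X in the weak operator topology. If the cone X_+ is a face of the bidual wedge X''_+, then J(X_+) is a face of Z_+ (in particular, Z_+ is a cone). -/

import Mathlib

/-- A wedge in a real vector space: a non-empty subset closed under addition and
under multiplication by non-negative scalars. -/
def IsWedge {V : Type*} [AddCommGroup V] [Module ℝ V] (W : Set V) : Prop :=
  W.Nonempty ∧ (∀ x ∈ W, ∀ y ∈ W, x + y ∈ W) ∧ (∀ a : ℝ, 0 ≤ a → ∀ x ∈ W, a • x ∈ W)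

/-- `C` is a face of the wedge `W`: `C` is a subset of `W` which is itself a wedge and
which contains the order interval `[0, w] = {y : y ∈ W ∧ w - y ∈ W}` for every `w ∈ C`. -/
def IsFaceOf {V : Type*} [AddCommGroup V] [Module ℝ V] (C W : Set V) : Prop :=
  C ⊆ W ∧ IsWedge C ∧ ∀ w ∈ C, ∀ y ∈ W, w - y ∈ W → y ∈ C

/-- The dual wedge of a subset `W` of a normed space, inside the topological dual. -/
def dualWedge {V : Type*} [NormedAddCommGroup V] [NormedSpace ℝ V] (W : Set V) :
    Set (V →L[ℝ] ℝ) := {f | ∀ x ∈ W, 0 ≤ f x}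

/-!
If `0 ≤ z ≤ J x`, then `0 ≤ Rₙ z ≤ Rₙ (J x)`. The right-hand side converges weakly, hence is
bounded, and normality bounds `Rₙ z` as well. By Banach–Alaoglu, along an ultrafilter the `Rₙ z`
converge weak-* to a bidual element `G` with `0 ≤ G ≤ x`; since `X₊` is a face of the bidual wedge,
`G` is some `y ∈ X₊`. Finally `J (Rₙ z)` converges weakly to both `J y` and `z`, so `z = J y`.
-/

open Filter Topology NormedSpace

section Wedges

variable {V V' F : Type*} [AddCommGroup V] [Module ℝ V] [AddCommGroup V'] [Module ℝ V']
  [FunLike F V V'] [LinearMapClass F ℝ V V']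

theorem IsWedge.zero_mem {W : Set V} (hW : IsWedge W) : (0 : V) ∈ W := by
  obtain ⟨⟨x, hx⟩, -, hsmul⟩ := hW
  simpa only [zero_smul] using hsmul 0 le_rfl x hx

theorem IsWedge.image {W : Set V} (hW : IsWedge W) (f : F) : IsWedge (f '' W) := by
  obtain ⟨hne, hadd, hsmul⟩ := hW
  refine ⟨hne.image f, ?_, ?_⟩
  · rintro _ ⟨x, hx, rfl⟩ _ ⟨y, hy, rfl⟩
    exact ⟨x + y, hadd x hx y hy, map_add f x y⟩
  · rintro a ha _ ⟨x, hx, rfl⟩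
    exact ⟨a • x, hsmul a ha x hx, map_smul f a x⟩

theorem IsWedge.preimage {W : Set V'} (hW : IsWedge W) (f : F) : IsWedge (f ⁻¹' W) := by
  have hzero : f 0 ∈ W := by simpa only [map_zero] using hW.zero_mem
  obtain ⟨-, hadd, hsmul⟩ := hW
  refine ⟨⟨0, hzero⟩, fun x hx y hy => ?_, fun a ha x hx => ?_⟩
  · simpa only [Set.mem_preimage, map_add] using hadd _ hx _ hy
  · simpa only [Set.mem_preimage, map_smul] using hsmul a ha _ hx

theorem IsWedge.of_image {W : Set V} {f : F} (hf : Function.Injective f)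
    (hW : IsWedge (f '' W)) : IsWedge W :=
  Set.preimage_image_eq W hf ▸ hW.preimage f

end Wedges

section NormalWedges

variable {E : Type*} [NormedAddCommGroup E]

/-- Normality of the pre-order `x ≤ y ↔ y - x ∈ W`: the norm is monotone on `W` up to a constant. -/
def IsNormalWedge (W : Set E) : Prop :=
  ∃ M : ℝ, 1 ≤ M ∧ ∀ x y : E, x ∈ W → y - x ∈ W → ‖x‖ ≤ M * ‖y‖

namespace IsNormalWedge

variable {W : Set E}

theorem eq_zero_of_mem_of_neg_mem (hW : IsNormalWedge W) {x : E} (hx : x ∈ W) (hnx : -x ∈ W) :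
    x = 0 := by
  obtain ⟨M, -, hM⟩ := hW
  simpa using hM x 0 hx (by simpa using hnx)

theorem exists_norm_le (hW : IsNormalWedge W) {ι : Type*} {u w : ι → E} (hu : ∀ i, u i ∈ W)
    (huw : ∀ i, w i - u i ∈ W) {C : ℝ} (hw : ∀ i, ‖w i‖ ≤ C) : ∃ C', ∀ i, ‖u i‖ ≤ C' := by
  obtain ⟨M, hM1, hM⟩ := hW
  refine ⟨M * C, fun i => ?_⟩
  calc
    ‖u i‖ ≤ M * ‖w i‖ := hM _ _ (hu i) (huw i)
    _ ≤ M * C := by gcongr; exact hw i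

end IsNormalWedge

end NormalWedges

section WeakCompactness

theorem exists_norm_le_of_bddAbove_dual_apply {𝕜 E ι : Type*} [RCLike 𝕜] [NormedAddCommGroup E]
    [NormedSpace 𝕜 E] {u : ι → E}
    (hu : ∀ f : StrongDual 𝕜 E, BddAbove (Set.range fun i => ‖f (u i)‖)) :
    ∃ C, ∀ i, ‖u i‖ ≤ C := by
  have hbidual : ∃ C, ∀ i, ‖inclusionInDoubleDual 𝕜 E (u i)‖ ≤ C := by
    refine banach_steinhaus fun f => ?_
    obtain ⟨c, hc⟩ := hu f
    exact ⟨c, fun i => hc ⟨i, rfl⟩⟩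
  obtain ⟨C, hC⟩ := hbidual
  exact ⟨C, fun i => ((inclusionInDoubleDualLi 𝕜 (E := E)).norm_map (u i)).ge.trans (hC i)⟩

theorem exists_tendsto_apply_of_norm_le {𝕜 E ι : Type*} [NontriviallyNormedField 𝕜]
    [ProperSpace 𝕜] [SeminormedAddCommGroup E] [NormedSpace 𝕜 E] (U : Ultrafilter ι)
    {φ : ι → StrongDual 𝕜 E} {C : ℝ} (hφ : ∀ i, ‖φ i‖ ≤ C) :
    ∃ G : StrongDual 𝕜 E, ∀ x, Tendsto (fun i => φ i x) U (𝓝 (G x)) := by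
  let u : ι → WeakDual 𝕜 E := fun i => StrongDual.toWeakDual (φ i)
  have hball : ∀ i, u i ∈ WeakDual.toStrongDual ⁻¹' Metric.closedBall (0 : StrongDual 𝕜 E) C :=
    fun i => mem_closedBall_zero_iff.2 (hφ i)
  obtain ⟨g, -, hg⟩ := (WeakDual.isCompact_closedBall (0 : StrongDual 𝕜 E) C).ultrafilter_le_nhds
    (U.map u) (le_principal_iff.2 (mem_map.2 (univ_mem' hball)))
  exact ⟨WeakDual.toStrongDual g, fun x => ((WeakDual.eval_continuous x).tendsto g).comp hg⟩

end WeakCompactness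

section BidualWedge

variable {E ι : Type*} [NormedAddCommGroup E] [NormedSpace ℝ E] {W : Set E}

theorem mem_dualWedge_dualWedge_of_tendsto {l : Filter ι} [l.NeBot] {v : ι → E}
    (hv : ∀ i, v i ∈ W) {G : StrongDual ℝ (StrongDual ℝ E)}
    (hG : ∀ f : StrongDual ℝ E, Tendsto (fun i => f (v i)) l (𝓝 (G f))) :
    G ∈ dualWedge (dualWedge W) :=
  fun f hf => ge_of_tendsto' (hG f) fun i => hf (v i) (hv i)

theorem exists_mem_tendsto_dual_apply_of_isFaceOf_bidual (hW : IsNormalWedge W)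
    (hface : IsFaceOf (inclusionInDoubleDual ℝ E '' W) (dualWedge (dualWedge W)))
    (U : Ultrafilter ι) {u w : ι → E} (hu : ∀ i, u i ∈ W) (huw : ∀ i, w i - u i ∈ W)
    {C : ℝ} (hwC : ∀ i, ‖w i‖ ≤ C) {x : E} (hx : x ∈ W)
    (hwx : ∀ f : StrongDual ℝ E, Tendsto (fun i => f (w i)) U (𝓝 (f x))) :
    ∃ y ∈ W, ∀ f : StrongDual ℝ E, Tendsto (fun i => f (u i)) U (𝓝 (f y)) := by
  obtain ⟨C', huC'⟩ := hW.exists_norm_le hu huw hwC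
  obtain ⟨G, hG⟩ := exists_tendsto_apply_of_norm_le U
    fun i => (double_dual_bound ℝ E (u i)).trans (huC' i)
  have hG_nonneg : G ∈ dualWedge (dualWedge W) := mem_dualWedge_dualWedge_of_tendsto hu hG
  have hG_le : inclusionInDoubleDual ℝ E x - G ∈ dualWedge (dualWedge W) :=
    mem_dualWedge_dualWedge_of_tendsto huw fun f => by
      simpa only [map_sub, sub_apply, dual_def] using (hwx f).sub (hG f)
  obtain ⟨y, hy, rfl⟩ := hface.2.2 _ ⟨x, hx, rfl⟩ G hG_nonneg hG_le
  exact ⟨y, hy, hG⟩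

end BidualWedge

section ApproximateInverses

variable {X Z : Type*} [NormedAddCommGroup X] [NormedSpace ℝ X]
  [NormedAddCommGroup Z] [NormedSpace ℝ Z] {Xp : Set X} {Zp : Set Z} {J : X →L[ℝ] Z}

theorem eq_apply_of_tendsto_dual_apply {ι : Type*} {l : Filter ι} [l.NeBot] {u : ι → X}
    {y : X} {z : Z} (hu : ∀ f : StrongDual ℝ X, Tendsto (fun i => f (u i)) l (𝓝 (f y)))
    (hJu : ∀ g : StrongDual ℝ Z, Tendsto (fun i => g (J (u i))) l (𝓝 (g z))) : z = J y :=
  (SeparatingDual.eq_iff_forall_dual_eq (R := ℝ)).2 fun g =>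
    tendsto_nhds_unique (hJu g) (hu (g.comp J))

theorem mem_image_of_isFaceOf_bidual (hX : IsNormalWedge Xp)
    (hface : IsFaceOf (inclusionInDoubleDual ℝ X '' Xp) (dualWedge (dualWedge Xp)))
    {R : ℕ → Z →ₗ[ℝ] X} (hRpos : ∀ n, ∀ z ∈ Zp, R n z ∈ Xp) {x : X} (hx : x ∈ Xp)
    (hRJ : ∀ f : StrongDual ℝ X, Tendsto (fun n => f (R n (J x))) atTop (𝓝 (f x)))
    {z : Z} (hz : z ∈ Zp) (hzx : J x - z ∈ Zp)
    (hJR : ∀ g : StrongDual ℝ Z, Tendsto (fun n => g (J (R n z))) atTop (𝓝 (g z))) :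
    z ∈ J '' Xp := by
  let U : Ultrafilter ℕ := Ultrafilter.of atTop
  have hU : (U : Filter ℕ) ≤ atTop := Ultrafilter.of_le atTop
  obtain ⟨C, hC⟩ :=
    exists_norm_le_of_bddAbove_dual_apply fun f => (hRJ f).norm.bddAbove_range
  have hRz_le : ∀ n, R n (J x) - R n z ∈ Xp := fun n => by
    simpa only [map_sub] using hRpos n _ hzx
  obtain ⟨y, hy, hRy⟩ := exists_mem_tendsto_dual_apply_of_isFaceOf_bidual hX hface U
    (fun n => hRpos n z hz) hRz_le hC hx fun f => (hRJ f).mono_left hU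
  exact ⟨y, hy, (eq_apply_of_tendsto_dual_apply hRy fun g => (hJR g).mono_left hU).symm⟩

theorem eq_zero_of_mem_of_neg_mem_of_tendsto {ι : Type*} {l : Filter ι} [l.NeBot]
    (hXp : ∀ x : X, x ∈ Xp → -x ∈ Xp → x = 0)
    {R : ι → Z →ₗ[ℝ] X} (hRpos : ∀ i, ∀ z ∈ Zp, R i z ∈ Xp) {z : Z}
    (hJR : ∀ g : StrongDual ℝ Z, Tendsto (fun i => g (J (R i z))) l (𝓝 (g z)))
    (hz : z ∈ Zp) (hnz : -z ∈ Zp) : z = 0 := by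
  have hRz : ∀ i, R i z = 0 := fun i =>
    hXp _ (hRpos i z hz) (by simpa only [map_neg] using hRpos i _ hnz)
  have hlim : ∀ f : StrongDual ℝ X, Tendsto (fun i => f (R i z)) l (𝓝 (f 0)) := fun f => by
    simpa only [hRz] using tendsto_const_nhds
  simpa only [map_zero] using eq_apply_of_tendsto_dual_apply hlim hJR

end ApproximateInverses

theorem stmt_7_general {X Z : Type*} [NormedAddCommGroup X] [NormedSpace ℝ X]
    [NormedAddCommGroup Z] [NormedSpace ℝ Z]
    (Xp : Set X) (hXnormal : IsNormalWedge Xp) (Zp : Set Z)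
    (J : X →L[ℝ] Z) (hJpos : ∀ x ∈ Xp, J x ∈ Zp)
    (R : ℕ → Z →ₗ[ℝ] X) (hRpos : ∀ n, ∀ z ∈ Zp, R n z ∈ Xp)
    (hJR : ∀ (z : Z) (z' : Z →L[ℝ] ℝ), Tendsto (fun n => z' (J (R n z))) atTop (𝓝 (z' z)))
    (hRJ : ∀ (x : X) (x' : X →L[ℝ] ℝ), Tendsto (fun n => x' (R n (J x))) atTop (𝓝 (x' x)))
    (hXface : IsFaceOf (inclusionInDoubleDual ℝ X '' Xp) (dualWedge (dualWedge Xp))) :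
    IsFaceOf (J '' Xp) Zp ∧ (∀ z : Z, z ∈ Zp → -z ∈ Zp → z = 0) := by
  have hXwedge : IsWedge Xp := hXface.2.1.of_image (inclusionInDoubleDualLi ℝ (E := X)).injective
  refine ⟨⟨Set.image_subset_iff.2 hJpos, hXwedge.image J, ?_⟩, fun z => ?_⟩
  · rintro _ ⟨x, hx, rfl⟩ z hz hzx
    exact mem_image_of_isFaceOf_bidual hXnormal hXface hRpos hx (hRJ x) hz hzx (hJR z)
  · exact eq_zero_of_mem_of_neg_mem_of_tendsto
      (fun _ => hXnormal.eq_zero_of_mem_of_neg_mem) hRpos (hJR z)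

/-- Let `X` be an ordered Banach space with normal cone, let `Z` be a pre-ordered Banach
space, and let `J : X → Z` be a positive bounded linear operator with dense range.
Assume there is a sequence `(Rₙ)` of positive bounded linear operators `Z → X` such
that `(J Rₙ)` converges to the identity of `Z` and `(Rₙ J)` converges to the identity
of `X`, both in the weak operator topology.  If the cone `Xp` is a face of the bidual
wedge, then `J '' Xp` is a face of `Zp`; in particular `Zp` is a cone. -/
theorem stmt_7
    {X Z : Type*}
    [NormedAddCommGroup X] [NormedSpace ℝ X] [CompleteSpace X]
    [NormedAddCommGroup Z] [NormedSpace ℝ Z] [CompleteSpace Z]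
    (Xp : Set X) (hXclosed : IsClosed Xp) (hX0 : (0 : X) ∈ Xp)
    (hXadd : ∀ x ∈ Xp, ∀ y ∈ Xp, x + y ∈ Xp)
    (hXsmul : ∀ a : ℝ, 0 ≤ a → ∀ x ∈ Xp, a • x ∈ Xp)
    (hXcone : ∀ x : X, x ∈ Xp → -x ∈ Xp → x = 0)
    (hXnormal : ∃ M : ℝ, 1 ≤ M ∧ ∀ x y : X, x ∈ Xp → y - x ∈ Xp → ‖x‖ ≤ M * ‖y‖)
    (Zp : Set Z) (hZclosed : IsClosed Zp) (hZ0 : (0 : Z) ∈ Zp)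
    (hZadd : ∀ x ∈ Zp, ∀ y ∈ Zp, x + y ∈ Zp)
    (hZsmul : ∀ a : ℝ, 0 ≤ a → ∀ x ∈ Zp, a • x ∈ Zp)
    (J : X →L[ℝ] Z)
    (hJpos : ∀ x ∈ Xp, J x ∈ Zp)
    (hJdense : DenseRange J)
    (R : ℕ → Z →L[ℝ] X)
    (hRpos : ∀ n : ℕ, ∀ z ∈ Zp, R n z ∈ Xp)
    (hJR : ∀ (z : Z) (z' : Z →L[ℝ] ℝ),
      Filter.Tendsto (fun n => z' (J (R n z))) Filter.atTop (nhds (z' z)))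
    (hRJ : ∀ (x : X) (x' : X →L[ℝ] ℝ),
      Filter.Tendsto (fun n => x' (R n (J x))) Filter.atTop (nhds (x' x)))
    (hXface : IsFaceOf ((NormedSpace.inclusionInDoubleDual ℝ X) '' Xp)
      (dualWedge (dualWedge Xp))) :
    IsFaceOf (J '' Xp) Zp ∧ (∀ z : Z, z ∈ Zp → -z ∈ Zp → z = 0) :=
  stmt_7_general Xp hXnormal Zp J hJpos (fun n => R n) hRpos hJR hRJ hXface
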